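/- Let d ≥ 1 and let M = I − E be a real d×d matrix such that |e_{ij}| ≤ ε for all i ≠ j and e_{ii} ≤ δ for 1 ≤ i ≤ d, where δ ≥ 0, ε ≥ 0, and δ + (d−1)ε ≤ 1. Then det(M) ≥ (1 − δ − (d−1)ε)·(1 − δ + ε)^{d−1}. -/

import Mathlib

open Matrix

/-!
Eliminate the first row and column with the pivot `p = M₀₀ ≥ a`. If the diagonal entries of `M` are
at least `a` and the off-diagonal ones at most `ε` in absolute value, the Schur complement of `p`
satisfies the same kind of bounds, with `a - ε² / p` and `ε + ε² / p`. The sum of the two bounds is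
still `a + ε`, so induction on the size produces the power of `a + ε`, and for a matrix of
size `n + 2` the remaining factor `p (a - n ε) - (n + 1) ε²` is, for `p ≥ a`, at least
`(a - (n + 1) ε) (a + ε)`.
-/

/-- The Schur complement of the top left entry of a square matrix, that is, what is left of the
matrix after Gaussian elimination in its first column. It is meant for a nonzero top left entry;
otherwise division by zero makes it a mere submatrix. -/
def pivotComplement {K : Type*} [Field K] {n : ℕ} (M : Matrix (Fin (n + 1)) (Fin (n + 1)) K) :
    Matrix (Fin n) (Fin n) K :=
  of fun i j => M i.succ j.succ - M i.succ 0 * M 0 j.succ / M 0 0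

theorem det_eq_mul_det_pivotComplement {K : Type*} [Field K] {n : ℕ}
    {M : Matrix (Fin (n + 1)) (Fin (n + 1)) K} (hpivot : M 0 0 ≠ 0) :
    M.det = M 0 0 * (pivotComplement M).det := by
  let e : Fin (n + 1) ≃ Fin n ⊕ Unit :=
    (finSuccEquiv n).trans (Equiv.optionEquivSumPUnit.{0} (Fin n))
  let row : Matrix Unit (Fin n) K := of fun _ j => M 0 j.succ
  let column : Matrix (Fin n) Unit K := of fun i _ => M i.succ 0
  let pivot : Matrix Unit Unit K := of fun _ _ => M 0 0
  let : Invertible pivot :=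
    ⟨of fun _ _ => (M 0 0)⁻¹, by ext; simp [pivot, mul_apply, hpivot],
      by ext; simp [pivot, mul_apply, hpivot]⟩
  have reindex_eq : reindex e e M =
      fromBlocks (M.submatrix Fin.succ Fin.succ) column row pivot := by
    ext (i | i) (j | j) <;> simp [e, row, column, pivot]
  have complement_eq :
      M.submatrix Fin.succ Fin.succ - column * ⅟pivot * row = pivotComplement M := by
    ext i j
    simp [pivotComplement, row, column, pivot, mul_apply, div_eq_mul_inv, mul_right_comm]
  rw [← det_reindex_self e, reindex_eq, det_fromBlocks₂₂, complement_eq, det_unique pivot]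
  rfl

section Bounds

variable {K : Type*} [Field K] [LinearOrder K] [IsStrictOrderedRing K] {n : ℕ}
  {M : Matrix (Fin (n + 1)) (Fin (n + 1)) K} {a ε : K}

theorem abs_mul_div_pivot_le (hpivot : 0 < M 0 0) (hoff : ∀ i j, i ≠ j → |M i j| ≤ ε)
    (i j : Fin n) : |M i.succ 0 * M 0 j.succ / M 0 0| ≤ ε ^ 2 / M 0 0 := by
  rw [abs_div, abs_mul, abs_of_pos hpivot, sq]
  have hrow := hoff 0 j.succ (Fin.succ_ne_zero j).symm
  have hcol := hoff i.succ 0 (Fin.succ_ne_zero i)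
  have hε : 0 ≤ ε := (abs_nonneg _).trans hrow
  gcongr

theorem abs_pivotComplement_apply_le (hpivot : 0 < M 0 0) (hoff : ∀ i j, i ≠ j → |M i j| ≤ ε)
    {i j : Fin n} (hij : i ≠ j) : |pivotComplement M i j| ≤ ε + ε ^ 2 / M 0 0 :=
  (abs_sub _ _).trans <| add_le_add (hoff _ _ <| (Fin.succ_injective n).ne hij)
    (abs_mul_div_pivot_le hpivot hoff i j)

theorem le_pivotComplement_apply_self (hpivot : 0 < M 0 0) (hoff : ∀ i j, i ≠ j → |M i j| ≤ ε)
    (hdiag : ∀ i, a ≤ M i i) (i : Fin n) : a - ε ^ 2 / M 0 0 ≤ pivotComplement M i i :=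
  sub_le_sub (hdiag _) ((le_abs_self _).trans (abs_mul_div_pivot_le hpivot hoff i i))

theorem sub_mul_add_le_mul_sub {p m : K} (hp : p ≠ 0) (hap : a ≤ p) (hma : m * ε ≤ a) :
    (a - (m + 1) * ε) * (a + ε) ≤ p * (a - ε ^ 2 / p - m * (ε + ε ^ 2 / p)) :=
  calc (a - (m + 1) * ε) * (a + ε) = a * (a - m * ε) - (m + 1) * ε ^ 2 := by ring
    _ ≤ p * (a - m * ε) - (m + 1) * ε ^ 2 := by
      have := sub_nonneg.mpr hma
      gcongr
    _ = p * (a - ε ^ 2 / p - m * (ε + ε ^ 2 / p)) := by field_simp; ring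

theorem sub_mul_add_pow_le_det (hoff : ∀ i j, i ≠ j → |M i j| ≤ ε) (hdiag : ∀ i, a ≤ M i i)
    (hdom : n * ε ≤ a) : (a - n * ε) * (a + ε) ^ n ≤ M.det := by
  induction n generalizing a ε with
  | zero => simpa using hdiag 0
  | succ n ih =>
    push_cast at hdom ⊢
    have hε : 0 ≤ ε := (abs_nonneg _).trans (hoff 0 1 Fin.zero_ne_one)
    have hmε : 0 ≤ n * ε := by positivity
    have ha : 0 ≤ a := by linarith
    rcases (ha.trans (hdiag 0)).eq_or_lt with hpivot | hpivot
    · obtain rfl : a = 0 := by linarith [hdiag 0]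
      obtain rfl : ε = 0 := by linarith
      have column_eq_zero (i : Fin (n + 2)) : M i 0 = 0 := by
        rcases eq_or_ne i 0 with rfl | hi
        · exact hpivot.symm
        · exact abs_nonpos_iff.mp (hoff i 0 hi)
      simp [det_eq_zero_of_column_eq_zero 0 column_eq_zero]
    · have pivot_bound : (a - (n + 1) * ε) * (a + ε) ≤
          M 0 0 * (a - ε ^ 2 / M 0 0 - n * (ε + ε ^ 2 / M 0 0)) :=
        sub_mul_add_le_mul_sub hpivot.ne' (hdiag 0) (by linarith)
      have complement_dom : n * (ε + ε ^ 2 / M 0 0) ≤ a - ε ^ 2 / M 0 0 :=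
        sub_nonneg.mp <| nonneg_of_mul_nonneg_right
          ((mul_nonneg (sub_nonneg.mpr hdom) (add_nonneg ha hε)).trans pivot_bound) hpivot
      have complement_bound := ih (fun i j => abs_pivotComplement_apply_le hpivot hoff)
        (le_pivotComplement_apply_self hpivot hoff hdiag) complement_dom
      rw [sub_add_add_cancel] at complement_bound
      calc (a - (n + 1) * ε) * (a + ε) ^ (n + 1)
          = (a - (n + 1) * ε) * (a + ε) * (a + ε) ^ n := by ring
        _ ≤ M 0 0 * (a - ε ^ 2 / M 0 0 - n * (ε + ε ^ 2 / M 0 0)) * (a + ε) ^ n := by gcongr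
        _ ≤ M 0 0 * (pivotComplement M).det := by rw [mul_assoc]; gcongr
        _ = M.det := (det_eq_mul_det_pivotComplement hpivot.ne').symm

end Bounds

theorem det_diagonally_dominant_lower_bound_general {K ι : Type*} [Field K] [LinearOrder K]
    [IsStrictOrderedRing K] [Fintype ι] [DecidableEq ι] [Nonempty ι] {E : Matrix ι ι K} {δ ε : K}
    (hoff : ∀ i j, i ≠ j → |E i j| ≤ ε) (hdiag : ∀ i, E i i ≤ δ)
    (hsum : δ + ((Fintype.card ι : K) - 1) * ε ≤ 1) :
    (1 - δ - ((Fintype.card ι : K) - 1) * ε) * (1 - δ + ε) ^ (Fintype.card ι - 1) ≤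
      (1 - E).det := by
  obtain ⟨n, hn⟩ := Nat.exists_eq_succ_of_ne_zero (Fintype.card_ne_zero (α := ι))
  let e : ι ≃ Fin (n + 1) := Fintype.equivFinOfCardEq hn
  have hcard : (Fintype.card ι : K) - 1 = n := by simp [hn]
  rw [hcard] at hsum ⊢
  rw [hn, Nat.succ_sub_one, ← det_reindex_self e]
  refine sub_mul_add_pow_le_det (fun i j hij => ?_) (fun i => ?_) (by linarith)
  · have hij' := e.symm.injective.ne hij
    simpa [one_apply_ne hij'] using hoff _ _ hij'
  · simpa using sub_le_sub_left (hdiag (e.symm i)) 1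

/-- Let `d ≥ 1` and `M = I − E` a real `d × d` matrix with `|e_{ij}| ≤ ε` for
all `i ≠ j` and `e_{ii} ≤ δ` for all `i`, where `δ ≥ 0`, `ε ≥ 0` and
`δ + (d−1)ε ≤ 1`.  Then `det M ≥ (1 − δ − (d−1)ε)(1 − δ + ε)^{d−1}`. -/
theorem det_diagonally_dominant_lower_bound (d : ℕ) (hd : 1 ≤ d)
    (E : Matrix (Fin d) (Fin d) ℝ) (δ ε : ℝ)
    (hδ : 0 ≤ δ) (hε : 0 ≤ ε)
    (hoff : ∀ i j, i ≠ j → |E i j| ≤ ε)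
    (hdiag : ∀ i, E i i ≤ δ)
    (hsum : δ + ((d : ℝ) - 1) * ε ≤ 1) :
    (1 - E).det ≥ (1 - δ - ((d : ℝ) - 1) * ε) * (1 - δ + ε) ^ (d - 1) := by
  have : NeZero d := ⟨by lia⟩
  simpa using det_diagonally_dominant_lower_bound_general hoff hdiag (by simpa using hsum)
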